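/- arXiv:1006.0070 — 2 statements merged into one kernel-verified Lean document; each statement's English description precedes it below -/
import Mathlib

section
/- Let μ₀, μ₁ : (−∞,0) → ℝ≥0 be locally integrable nondecreasing functions. Define a_i(τ) = 4π√2 ∫_{−∞}^{τ} μ_i(w) √(τ−w) dw for τ < 0, and assume these integrals are finite and a₀(τ) = a₁(τ) for all τ < 0. Then μ₀(λ) = μ₁(λ) for almost every λ < 0. -/
open Real Set MeasureTheory

/-!
Write `I^α F (τ) = Γ(α)⁻¹ ∫_{w < τ} (τ - w)^(α - 1) F(w) dw`. The Beta integral and Fubini's theorem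
give `I^β (I^α F) = I^(α + β) F`, and `I^1` is injective by Lebesgue differentiation. Hence
`I^(α + 1) F = I^1 (I^α F) = 0` forces `I^α F = 0`, so the order can be lowered by `1` until it lies
in `(0, 1]`; applying `I^(1 - α)` then yields `I^1 F = 0`, and so `F = 0`. Lowering the order first
is essential: raising it may destroy integrability at `-∞`, whereas `I^1 F` converges as soon as
some `I^α F` with `α ≥ 1` does. The theorem is the case `α = 3/2`.
-/

section HalfLine

lemma exists_mem_Ioo_of_ae_restrict_Iio {P : ℝ → Prop} {a t : ℝ}
    (hP : ∀ᵐ τ ∂volume.restrict (Iio a), P τ) (ht : t < a) : ∃ τ ∈ Ioo t a, P τ := by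
  have hPt : ∀ᵐ τ ∂volume.restrict (Ioo t a), P τ :=
    ae_restrict_of_ae_restrict_of_subset Ioo_subset_Iio_self hP
  have : NeZero (volume.restrict (Ioo t a)) := ⟨by simpa using ht⟩
  exact ((ae_restrict_mem measurableSet_Ioo).and hPt).exists

lemma ae_restrict_Iio_of_ae_ae {P : ℝ → Prop} {a : ℝ}
    (hP : ∀ᵐ τ ∂volume.restrict (Iio a), ∀ᵐ s ∂volume.restrict (Iio τ), P s) :
    ∀ᵐ s ∂volume.restrict (Iio a), P s := by
  obtain ⟨u, -, hua, hu⟩ := exists_seq_strictMono_tendsto a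
  choose τ hτ hPτ using fun n => exists_mem_Ioo_of_ae_restrict_Iio hP (hua n)
  have hcover : Iio a ⊆ ⋃ n, Iio (τ n) := fun s hs =>
    let ⟨n, hn⟩ := (hu.eventually_const_lt hs).exists
    mem_iUnion.2 ⟨n, hn.trans (hτ n).1⟩
  exact ae_restrict_of_ae_restrict_of_subset hcover ((ae_restrict_iUnion_iff _ _).2 hPτ)

variable {E : Type*} [NormedAddCommGroup E] [NormedSpace ℝ E] [CompleteSpace E]

lemma ae_eq_zero_of_setIntegral_Iio_eq_zero {G : ℝ → E} {b : ℝ} (hG : IntegrableOn G (Iio b))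
    (hzero : ∀ᵐ t ∂volume.restrict (Iio b), ∫ s in Iio t, G s = 0) :
    ∀ᵐ t ∂volume.restrict (Iio b), G t = 0 := by
  have hprim : EqOn (fun t => ∫ s in Iio t, G s) 0 (Iio b) :=
    Measure.eqOn_open_of_ae_eq hzero isOpen_Iio
      (hG.continuousOn_Iic_primitive_Iio.mono Iio_subset_Iic_self)
      continuousOn_const
  have hinterval (c t : ℝ) (hc : c < b) (ht : t < b) :
      ∫ s in c..t, (Iio b).indicator G s = 0 := by
    have hGi := (integrable_indicator_iff measurableSet_Iio).2 hG
    rw [← intervalIntegral.integral_Iio_sub_Iio' hGi.integrableOn hGi.integrableOn,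
      setIntegral_indicator measurableSet_Iio, setIntegral_indicator measurableSet_Iio,
      Iio_inter_Iio, Iio_inter_Iio, min_eq_left hc.le, min_eq_left ht.le]
    exact sub_eq_zero.2 ((hprim ht).trans (hprim hc).symm)
  have hloc := ((integrable_indicator_iff measurableSet_Iio).2 hG).locallyIntegrable
  rw [ae_restrict_iff' measurableSet_Iio]
  filter_upwards [LocallyIntegrable.ae_hasDerivAt_integral hloc] with t hderiv ht
  rw [← indicator_of_mem ht G]
  refine (hderiv (t - 1)).unique ((hasDerivAt_const t 0).congr_of_eventuallyEq ?_)
  filter_upwards [Iio_mem_nhds ht] with x hx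
  exact hinterval (t - 1) x (by grind) hx

end HalfLine

lemma integrable_prod_smul {X Y E : Type*} [MeasurableSpace X] [MeasurableSpace Y]
    [NormedAddCommGroup E] [NormedSpace ℝ E] {μ : Measure X} {ν : Measure Y} [SFinite ν]
    {k : X → Y → ℝ} {F : X → E}
    (hk : AEStronglyMeasurable (Function.uncurry k) (μ.prod ν)) (hk0 : ∀ x y, 0 ≤ k x y)
    (hki : ∀ x, Integrable (k x) ν) (hF : AEStronglyMeasurable F μ)
    (hkF : Integrable (fun x => (∫ y, k x y ∂ν) • F x) μ) :
    Integrable (fun p : X × Y => k p.1 p.2 • F p.1) (μ.prod ν) := by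
  refine (integrable_prod_iff (hk.smul hF.comp_fst)).2
    ⟨.of_forall fun x => (hki x).smul_const (F x), hkF.norm.congr (.of_forall fun x => ?_)⟩
  calc ‖(∫ y, k x y ∂ν) • F x‖ = (∫ y, k x y ∂ν) * ‖F x‖ := by
        rw [norm_smul, norm_of_nonneg (integral_nonneg (hk0 x))]
    _ = ∫ y, ‖k x y • F x‖ ∂ν := by
        simp only [norm_smul, norm_of_nonneg (hk0 x _), integral_mul_const]

section Beta

open ProbabilityTheory
  (betaPDFReal betaPDFReal_pos measurable_betaPDFReal lintegral_betaPDF_eq_one)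

lemma betaPDFReal_nonneg {α β : ℝ} (hα : 0 < α) (hβ : 0 < β) (x : ℝ) : 0 ≤ betaPDFReal α β x := by
  by_cases hx : 0 < x ∧ x < 1
  · exact (betaPDFReal_pos hx.1 hx.2 hα hβ).le
  · rw [betaPDFReal, if_neg hx]

lemma integrable_betaPDFReal {α β : ℝ} (hα : 0 < α) (hβ : 0 < β) :
    Integrable (betaPDFReal α β) := by
  refine ⟨(measurable_betaPDFReal α β).aestronglyMeasurable, ?_⟩
  rw [hasFiniteIntegral_iff_ofReal (.of_forall (betaPDFReal_nonneg hα hβ))]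
  exact (lintegral_betaPDF_eq_one hα hβ).trans_lt ENNReal.one_lt_top

lemma integral_betaPDFReal {α β : ℝ} (hα : 0 < α) (hβ : 0 < β) : ∫ x, betaPDFReal α β x = 1 := by
  rw [integral_eq_lintegral_of_nonneg_ae (.of_forall (betaPDFReal_nonneg hα hβ))
    (measurable_betaPDFReal α β).aestronglyMeasurable]
  exact congrArg ENNReal.toReal (lintegral_betaPDF_eq_one hα hβ)

end Beta

/-- The Riemann–Liouville kernel `t₊^(α - 1) / Γ(α)` of order `α`, extended by `0` to `t ≤ 0`
so that convolutions with it can be written as integrals over all of `ℝ`. -/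
noncomputable def rlKernel (α : ℝ) : ℝ → ℝ :=
  (Ioi 0).indicator fun t => (Gamma α)⁻¹ * t ^ (α - 1)

section Kernel

open ProbabilityTheory (beta betaPDFReal)

variable {α β : ℝ}

@[fun_prop]
lemma measurable_rlKernel (α : ℝ) : Measurable (rlKernel α) :=
  Measurable.indicator (by fun_prop) measurableSet_Ioi

lemma rlKernel_of_pos (α : ℝ) {t : ℝ} (ht : 0 < t) : rlKernel α t = (Gamma α)⁻¹ * t ^ (α - 1) :=
  indicator_of_mem ht _

lemma rlKernel_of_nonpos (α : ℝ) {t : ℝ} (ht : t ≤ 0) : rlKernel α t = 0 :=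
  indicator_of_notMem (notMem_Ioi.2 ht) _

lemma rlKernel_pos (hα : 0 < α) {t : ℝ} (ht : 0 < t) : 0 < rlKernel α t := by
  rw [rlKernel_of_pos α ht]
  exact mul_pos (inv_pos.2 (Gamma_pos_of_pos hα)) (rpow_pos_of_pos ht _)

lemma rlKernel_nonneg (hα : 0 < α) (t : ℝ) : 0 ≤ rlKernel α t := by
  rcases le_or_gt t 0 with ht | ht
  · rw [rlKernel_of_nonpos α ht]
  · exact (rlKernel_pos hα ht).le

lemma rlKernel_mul_rlKernel_eq_betaPDFReal (hα : 0 < α) (hβ : 0 < β) {t : ℝ} (ht : 0 < t) (u : ℝ) :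
    rlKernel β (t - u) * rlKernel α u =
      rlKernel (α + β) t * (t⁻¹ * betaPDFReal α β (t⁻¹ * u)) := by
  rw [betaPDFReal]
  split_ifs with h
  · obtain ⟨h0, h1⟩ := h
    have hu : 0 < u := by simpa [ht] using h0
    have hut : u < t := by simpa [inv_mul_lt_iff₀ ht] using h1
    have hΓα := (Gamma_pos_of_pos hα).ne'
    have hΓβ := (Gamma_pos_of_pos hβ).ne'
    have hΓ := (Gamma_pos_of_pos (add_pos hα hβ)).ne'
    have htpow : t ^ (α + β - 1) = t ^ (α - 1) * t ^ (β - 1) * t := by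
      rw [← rpow_add ht, ← rpow_add_one ht.ne']; ring_nf
    have hsub : 1 - t⁻¹ * u = t⁻¹ * (t - u) := by field_simp
    rw [rlKernel_of_pos _ (sub_pos.2 hut), rlKernel_of_pos _ hu, rlKernel_of_pos _ ht, hsub,
      mul_rpow (by positivity) hu.le, mul_rpow (by positivity) (sub_nonneg.2 hut.le),
      inv_rpow ht.le, inv_rpow ht.le, htpow, beta]
    field_simp
  · have hut : u ≤ 0 ∨ t - u ≤ 0 := by
      by_contra! hut
      exact h ⟨by have := hut.1; positivity, by rw [inv_mul_lt_iff₀ ht]; linarith⟩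
    rcases hut with hu | hu <;> simp [rlKernel_of_nonpos _ hu]

lemma rlKernel_mul_rlKernel_eq_zero (α β : ℝ) {w τ : ℝ} (h : τ ≤ w) (s : ℝ) :
    rlKernel β (τ - s) * rlKernel α (s - w) = 0 := by
  rcases le_total s w with hs | hs
  · rw [rlKernel_of_nonpos α (sub_nonpos.2 hs), mul_zero]
  · rw [rlKernel_of_nonpos β (sub_nonpos.2 (h.trans hs)), zero_mul]

lemma integrable_rlKernel_mul_rlKernel (hα : 0 < α) (hβ : 0 < β) (w τ : ℝ) :
    Integrable fun s => rlKernel β (τ - s) * rlKernel α (s - w) := by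
  rcases le_or_gt τ w with h | h
  · exact (integrable_zero ℝ ℝ volume).congr
      (.of_forall fun s => (rlKernel_mul_rlKernel_eq_zero α β h s).symm)
  · have ht : 0 < τ - w := sub_pos.2 h
    have hscaled := (integrable_betaPDFReal hα hβ).comp_mul_left' (inv_ne_zero ht.ne')
    simpa only [← rlKernel_mul_rlKernel_eq_betaPDFReal hα hβ ht, sub_sub_sub_cancel_right] using
      ((hscaled.const_mul (τ - w)⁻¹).const_mul (rlKernel (α + β) (τ - w))).comp_sub_right w

lemma integral_rlKernel_mul_rlKernel (hα : 0 < α) (hβ : 0 < β) (w τ : ℝ) :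
    ∫ s, rlKernel β (τ - s) * rlKernel α (s - w) = rlKernel (α + β) (τ - w) := by
  rcases le_or_gt τ w with h | h
  · simp only [rlKernel_mul_rlKernel_eq_zero α β h, integral_zero,
      rlKernel_of_nonpos _ (sub_nonpos.2 h)]
  have ht : 0 < τ - w := sub_pos.2 h
  calc ∫ s, rlKernel β (τ - s) * rlKernel α (s - w)
      = ∫ u, rlKernel β (τ - w - u) * rlKernel α u := by
        rw [← integral_sub_right_eq_self (fun u => rlKernel β (τ - w - u) * rlKernel α u) w]
        simp only [sub_sub_sub_cancel_right]
    _ = rlKernel (α + β) (τ - w) *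
          ((τ - w)⁻¹ * ∫ u, betaPDFReal α β ((τ - w)⁻¹ * u)) := by
        simp only [rlKernel_mul_rlKernel_eq_betaPDFReal hα hβ ht, integral_const_mul]
    _ = rlKernel (α + β) (τ - w) := by
        rw [Measure.integral_comp_inv_mul_left, integral_betaPDFReal hα hβ, abs_of_pos ht,
          smul_eq_mul, mul_one, inv_mul_cancel₀ ht.ne', mul_one]

end Kernel

section FractionalIntegral

variable {E : Type*} [NormedAddCommGroup E] [NormedSpace ℝ E]

/-- The Riemann–Liouville fractional integral of order `α` with base point `-∞`, normalised so that
orders add up under composition. -/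
noncomputable def rlIntegral (α : ℝ) (F : ℝ → E) (τ : ℝ) : E :=
  ∫ w, rlKernel α (τ - w) • F w

/-- Absolute convergence of the fractional integral `rlIntegral α F τ`. -/
def RLIntegrable (α : ℝ) (F : ℝ → E) (τ : ℝ) : Prop :=
  Integrable fun w => rlKernel α (τ - w) • F w

variable {α β τ : ℝ} {F : ℝ → E}

lemma rlKernel_sub_smul_eq_indicator (α : ℝ) (F : ℝ → E) (τ : ℝ) :
    (fun w => rlKernel α (τ - w) • F w) =
      (Iio τ).indicator fun w => (Gamma α)⁻¹ • (τ - w) ^ (α - 1) • F w := by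
  ext w
  rcases lt_or_ge w τ with hw | hw
  · rw [indicator_of_mem (mem_Iio.2 hw), rlKernel_of_pos _ (sub_pos.2 hw), mul_smul]
  · rw [indicator_of_notMem (notMem_Iio.2 hw), rlKernel_of_nonpos _ (sub_nonpos.2 hw), zero_smul]

lemma rlIntegrable_iff (hα : 0 < α) :
    RLIntegrable α F τ ↔ IntegrableOn (fun w => (τ - w) ^ (α - 1) • F w) (Iio τ) := by
  rw [RLIntegrable, rlKernel_sub_smul_eq_indicator, integrable_indicator_iff measurableSet_Iio]
  exact integrable_smul_iff (inv_ne_zero (Gamma_pos_of_pos hα).ne') _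

lemma rlIntegral_eq_setIntegral (α : ℝ) (F : ℝ → E) (τ : ℝ) :
    rlIntegral α F τ = (Gamma α)⁻¹ • ∫ w in Iio τ, (τ - w) ^ (α - 1) • F w := by
  rw [rlIntegral, rlKernel_sub_smul_eq_indicator, integral_indicator measurableSet_Iio,
    integral_smul]

lemma rlIntegrable_one_iff : RLIntegrable 1 F τ ↔ IntegrableOn F (Iio τ) := by
  simp only [rlIntegrable_iff one_pos, sub_self, rpow_zero, one_smul]

lemma rlIntegral_one (F : ℝ → E) (τ : ℝ) : rlIntegral 1 F τ = ∫ w in Iio τ, F w := by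
  simp only [rlIntegral_eq_setIntegral, Gamma_one, inv_one, sub_self, rpow_zero, one_smul]

lemma RLIntegrable.aestronglyMeasurable (hα : 0 < α) (hF : RLIntegrable α F τ) :
    AEStronglyMeasurable F (volume.restrict (Iio τ)) := by
  have hK : AEStronglyMeasurable (fun w => rlKernel α (τ - w)) (volume.restrict (Iio τ)) :=
    Measurable.aestronglyMeasurable (by fun_prop)
  refine (aestronglyMeasurable_smul_iff₀ hK ?_).1 (Integrable.aestronglyMeasurable hF).restrict
  exact ae_restrict_of_forall_mem measurableSet_Iio fun w hw =>
    (rlKernel_pos hα (sub_pos.2 hw)).ne'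

lemma RLIntegrable.integrableOn_Iio (hα : 1 ≤ α) (hF : RLIntegrable α F τ) {b : ℝ} (hb : b < τ) :
    IntegrableOn F (Iio b) := by
  have hα0 : 0 < α := one_pos.trans_le hα
  have hb0 : 0 < (τ - b) ^ (α - 1) := rpow_pos_of_pos (sub_pos.2 hb) _
  have hsub : Iio b ⊆ Iio τ := Iio_subset_Iio hb.le
  have hpow := (((rlIntegrable_iff hα0).1 hF).mono_set hsub).norm.const_mul ((τ - b) ^ (α - 1))⁻¹
  refine hpow.mono' ((hF.aestronglyMeasurable hα0).mono_set hsub)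
    (ae_restrict_of_forall_mem measurableSet_Iio fun w hw => ?_)
  have hle : (τ - b) ^ (α - 1) ≤ (τ - w) ^ (α - 1) :=
    rpow_le_rpow (sub_pos.2 hb).le (sub_le_sub_left (le_of_lt hw) τ) (sub_nonneg.2 hα)
  rw [norm_smul, norm_of_nonneg (hb0.le.trans hle), le_inv_mul_iff₀ hb0]
  exact mul_le_mul_of_nonneg_right hle (norm_nonneg _)

lemma RLIntegrable.integrable_prod (hα : 0 < α) (hβ : 0 < β) (hF : RLIntegrable (α + β) F τ) :
    Integrable fun p : ℝ × ℝ => (rlKernel β (τ - p.2) * rlKernel α (p.2 - p.1)) • F p.1 := by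
  -- Truncate `F`, because it is known to be measurable on `Iio τ` only.
  have htrunc (w c : ℝ) (hc : τ ≤ w → c = 0) : c • (Iio τ).indicator F w = c • F w := by
    rcases lt_or_ge w τ with hw | hw
    · rw [indicator_of_mem (mem_Iio.2 hw)]
    · rw [hc hw, zero_smul, zero_smul]
  have hprod := integrable_prod_smul (μ := volume) (ν := volume) (F := (Iio τ).indicator F)
    (k := fun w s => rlKernel β (τ - s) * rlKernel α (s - w))
    (Measurable.aestronglyMeasurable (by fun_prop))
    (fun w s => mul_nonneg (rlKernel_nonneg hβ _) (rlKernel_nonneg hα _))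
    (fun w => integrable_rlKernel_mul_rlKernel hα hβ w τ)
    ((aestronglyMeasurable_indicator_iff measurableSet_Iio).2
      (hF.aestronglyMeasurable (add_pos hα hβ))) (by
      simp only [integral_rlKernel_mul_rlKernel hα hβ]
      refine hF.congr (.of_forall fun w => (htrunc w _ fun hw => ?_).symm)
      exact rlKernel_of_nonpos _ (sub_nonpos.2 hw))
  exact hprod.congr (.of_forall fun p =>
    htrunc p.1 _ fun hp => rlKernel_mul_rlKernel_eq_zero α β hp p.2)

lemma RLIntegrable.ae_of_add (hα : 0 < α) (hβ : 0 < β) (hF : RLIntegrable (α + β) F τ) :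
    ∀ᵐ s ∂volume.restrict (Iio τ), RLIntegrable α F s := by
  filter_upwards [ae_restrict_of_ae (hF.integrable_prod hα hβ).prod_left_ae,
    ae_restrict_mem measurableSet_Iio] with s hs hsτ
  simp only [mul_smul] at hs
  exact (integrable_smul_iff (rlKernel_pos hβ (sub_pos.2 hsτ)).ne' _).1 hs

lemma RLIntegrable.rlIntegrable_rlIntegral (hα : 0 < α) (hβ : 0 < β)
    (hF : RLIntegrable (α + β) F τ) : RLIntegrable β (rlIntegral α F) τ := by
  simpa only [RLIntegrable, rlIntegral, mul_smul, integral_smul] using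
    (hF.integrable_prod hα hβ).integral_prod_right

lemma rlIntegral_rlIntegral [CompleteSpace E] (hα : 0 < α) (hβ : 0 < β)
    (hF : RLIntegrable (α + β) F τ) :
    rlIntegral β (rlIntegral α F) τ = rlIntegral (α + β) F τ := by
  calc rlIntegral β (rlIntegral α F) τ
      = ∫ s, ∫ w, (rlKernel β (τ - s) * rlKernel α (s - w)) • F w := by
        simp only [rlIntegral, mul_smul, integral_smul]
    _ = ∫ w, ∫ s, (rlKernel β (τ - s) * rlKernel α (s - w)) • F w :=
        (integral_integral_swap (hF.integrable_prod hα hβ)).symm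
    _ = rlIntegral (α + β) F τ := by
        simp only [rlIntegral, integral_smul_const, integral_rlKernel_mul_rlKernel hα hβ]

lemma rlIntegral_eq_zero_of_ae (α : ℝ) (hF : ∀ᵐ w ∂volume.restrict (Iio τ), F w = 0) :
    rlIntegral α F τ = 0 := by
  have hint : ∫ w in Iio τ, (τ - w) ^ (α - 1) • F w = 0 :=
    integral_eq_zero_of_ae (hF.mono fun w hw => by simp [hw])
  rw [rlIntegral_eq_setIntegral, hint, smul_zero]

end FractionalIntegral

/-- The fractional integral of order `α` of `F` converges to `0` at almost every point of `(-∞, a)`.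
Almost everywhere is the right notion here: for `α < 1`, convergence at every point is not inherited
from higher orders. -/
def RLVanishesBelow {E : Type*} [NormedAddCommGroup E] [NormedSpace ℝ E]
    (α : ℝ) (F : ℝ → E) (a : ℝ) : Prop :=
  ∀ᵐ τ ∂volume.restrict (Iio a), RLIntegrable α F τ ∧ rlIntegral α F τ = 0

namespace RLVanishesBelow

variable {E : Type*} [NormedAddCommGroup E] [NormedSpace ℝ E] [CompleteSpace E]
  {α β a : ℝ} {F : ℝ → E}

lemma ae_eq_zero_of_order_one (hF : RLVanishesBelow 1 F a) :
    ∀ᵐ s ∂volume.restrict (Iio a), F s = 0 := by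
  apply ae_restrict_Iio_of_ae_ae
  filter_upwards [hF, ae_restrict_mem measurableSet_Iio] with τ hτ hτa
  refine ae_eq_zero_of_setIntegral_Iio_eq_zero (rlIntegrable_one_iff.1 hτ.1) ?_
  filter_upwards [ae_restrict_of_ae_restrict_of_subset (Iio_subset_Iio (le_of_lt hτa)) hF] with t ht
  rw [← rlIntegral_one, ht.2]

lemma of_order_add_one (hα : 0 < α) (hF : RLVanishesBelow (α + 1) F a) : RLVanishesBelow α F a := by
  have hint : ∀ᵐ s ∂volume.restrict (Iio a), RLIntegrable α F s :=
    ae_restrict_Iio_of_ae_ae (hF.mono fun τ hτ => hτ.1.ae_of_add hα one_pos)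
  have hone : RLVanishesBelow 1 (rlIntegral α F) a := hF.mono fun τ ⟨hi, hzero⟩ =>
    ⟨hi.rlIntegrable_rlIntegral hα one_pos, (rlIntegral_rlIntegral hα one_pos hi).trans hzero⟩
  exact hint.and hone.ae_eq_zero_of_order_one

lemma of_order_le (hα : 0 < α) (hαβ : α ≤ β) (hF : RLVanishesBelow α F a)
    (hint : ∀ᵐ τ ∂volume.restrict (Iio a), RLIntegrable β F τ) : RLVanishesBelow β F a := by
  rcases hαβ.eq_or_lt with rfl | hlt
  · exact hF
  filter_upwards [hint, ae_restrict_mem measurableSet_Iio] with τ hτ hτa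
  refine ⟨hτ, ?_⟩
  rw [← add_sub_cancel α β] at hτ ⊢
  rw [← rlIntegral_rlIntegral hα (sub_pos.2 hlt) hτ]
  refine rlIntegral_eq_zero_of_ae _ ?_
  exact (ae_restrict_of_ae_restrict_of_subset (Iio_subset_Iio (le_of_lt hτa)) hF).mono
    fun s hs => hs.2

lemma order_one (hα : 0 < α) (hF : RLVanishesBelow α F a)
    (hint : ∀ᵐ τ ∂volume.restrict (Iio a), IntegrableOn F (Iio τ)) : RLVanishesBelow 1 F a := by
  obtain ⟨n, hn⟩ := exists_nat_ge α
  induction n generalizing α with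
  | zero => exact absurd hn (by simpa using hα)
  | succ n ih =>
    rcases le_or_gt α 1 with hα1 | hα1
    · exact hF.of_order_le hα hα1 (hint.mono fun τ hτ => rlIntegrable_one_iff.2 hτ)
    · refine ih (sub_pos.2 hα1) (of_order_add_one (sub_pos.2 hα1) ?_) (by push_cast at hn; linarith)
      rwa [sub_add_cancel]

lemma ae_eq_zero (hα : 1 ≤ α) (hF : RLVanishesBelow α F a) :
    ∀ᵐ s ∂volume.restrict (Iio a), F s = 0 := by
  have hint : ∀ b ∈ Iio a, IntegrableOn F (Iio b) := fun b hb =>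
    let ⟨_, hτ, hFτ⟩ := exists_mem_Ioo_of_ae_restrict_Iio hF hb
    hFτ.1.integrableOn_Iio hα hτ.1
  exact (hF.order_one (one_pos.trans_le hα)
    (ae_restrict_of_forall_mem measurableSet_Iio hint)).ae_eq_zero_of_order_one

end RLVanishesBelow

theorem abel_transform_injective_general {E : Type*} [NormedAddCommGroup E] [NormedSpace ℝ E]
    [CompleteSpace E] {p a : ℝ} (hp : 0 ≤ p) {f g : ℝ → E}
    (hf : ∀ᵐ τ ∂volume.restrict (Iio a), IntegrableOn (fun w => (τ - w) ^ p • f w) (Iio τ))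
    (hg : ∀ᵐ τ ∂volume.restrict (Iio a), IntegrableOn (fun w => (τ - w) ^ p • g w) (Iio τ))
    (hfg : ∀ᵐ τ ∂volume.restrict (Iio a),
      ∫ w in Iio τ, (τ - w) ^ p • f w = ∫ w in Iio τ, (τ - w) ^ p • g w) :
    f =ᵐ[volume.restrict (Iio a)] g := by
  have hvanish : RLVanishesBelow (p + 1) (f - g) a := by
    filter_upwards [hf, hg, hfg] with τ hfτ hgτ hτ
    rw [rlIntegrable_iff (by positivity), rlIntegral_eq_setIntegral]
    simp only [add_sub_cancel_right, Pi.sub_apply, smul_sub]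
    exact ⟨hfτ.sub hgτ, by rw [integral_sub hfτ hgτ, hτ, sub_self, smul_zero]⟩
  exact (hvanish.ae_eq_zero (le_add_of_nonneg_left hp)).mono fun w hw => sub_eq_zero.1 hw

/-- If the Abel-type transforms `a_i(τ) = 4π√2 ∫_{-∞}^{τ} μ_i(w) √(τ-w) dw` of two
nondecreasing nonnegative functions `μ₀, μ₁` on `(-∞,0)` coincide for all `τ < 0`,
then `μ₀ = μ₁` almost everywhere on `(-∞,0)`. -/
theorem abel_transform_injective (μ₀ μ₁ : ℝ → ℝ)
    (hm0 : MonotoneOn μ₀ (Set.Iio 0)) (hm1 : MonotoneOn μ₁ (Set.Iio 0))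
    (hn0 : ∀ w, w < 0 → 0 ≤ μ₀ w) (hn1 : ∀ w, w < 0 → 0 ≤ μ₁ w)
    (hi0 : ∀ τ, τ < 0 → IntegrableOn (fun w => μ₀ w * Real.sqrt (τ - w)) (Set.Iio τ))
    (hi1 : ∀ τ, τ < 0 → IntegrableOn (fun w => μ₁ w * Real.sqrt (τ - w)) (Set.Iio τ))
    (heq : ∀ τ, τ < 0 →
      4 * π * Real.sqrt 2 * ∫ w in Set.Iio τ, μ₀ w * Real.sqrt (τ - w)
        = 4 * π * Real.sqrt 2 * ∫ w in Set.Iio τ, μ₁ w * Real.sqrt (τ - w)) :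
    ∀ᵐ lam ∂(volume.restrict (Set.Iio (0:ℝ))), μ₀ lam = μ₁ lam := by
  have hconst : 4 * π * √2 ≠ 0 := by positivity
  have hkernel (x τ w : ℝ) : x * √(τ - w) = (τ - w) ^ (1 / 2 : ℝ) • x := by
    rw [sqrt_eq_rpow, smul_eq_mul, mul_comm]
  simp only [hkernel, mul_right_inj' hconst] at hi0 hi1 heq
  exact abel_transform_injective_general one_half_pos.le
    (ae_restrict_of_forall_mem measurableSet_Iio hi0)
    (ae_restrict_of_forall_mem measurableSet_Iio hi1)
    (ae_restrict_of_forall_mem measurableSet_Iio heq)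
end

section
/- Let ψ₀, ψ₁ : ℝ³ → ℝ be continuous, spherically symmetric, nondecreasing in |x|, with bounded negativity sets {ψ_i < 0}, and let F : ℝ → ℝ≥0 be continuous, strictly decreasing on (−∞,0], with F((−∞,0]) = [0,∞) and F = 0 on [0,∞). Define Q_i(x,v) = F(|v|²/2 + ψ_i(x)) on ℝ³×ℝ³. If Q₀ and Q₁ are equimeasurable for Lebesgue measure on ℝ⁶ (i.e. meas{Q₀ > t} = meas{Q₁ > t} for all t > 0), then Q₀ = Q₁. -/
open Real Set MeasureTheory

open scoped ENNReal Pointwise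

/-!
The energy `‖v‖² / 2 + ψ x` is distributed as the convolution of the distribution `κ` of the kinetic
energy with that of `ψ x`. Since the profile is strictly decreasing where it is positive,
equimeasurability says that these convolutions agree below `0`. As `κ` lives on `[0, ∞)`, convolving
once more with `κ` preserves this agreement. By scaling, `(κ ∗ κ) (Iio a)` is proportional to
`a ^ d` for `0 < a`, with `d` the dimension of the velocity space, so `κ ∗ κ` acts as `d`-fold
integration of distribution functions. Undoing it shows that the sublevel sets of `ψ₀` and `ψ₁` at
each negative level have the same measure, and these are balls.
-/

section DistributionFunctions

/-- Agreement of the distribution functions of two measures on `ℝ` to the left of `b`. Open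
half-lines are used, so that it concerns strict sublevel sets. -/
def AgreeBelow (b : ℝ) (ν₀ ν₁ : Measure ℝ) : Prop :=
  ∀ a < b, ν₀ (Iio a) = ν₁ (Iio a)

variable {ν ρ ν₀ ν₁ : Measure ℝ} {a b m : ℝ}

lemma measure_Iio_le_of_forall_lt {c : ℝ≥0∞} (h : ∀ s < a, ν (Iio s) ≤ c) : ν (Iio a) ≤ c := by
  obtain ⟨u, hu_mono, hu_lt, hu_lim⟩ := exists_seq_strictMono_tendsto a
  have hIic_mono : Monotone fun n ↦ Iic (u n) := monotone_Iic.comp hu_mono.monotone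
  rw [← iUnion_Iic_eq_Iio_of_lt_of_tendsto hu_lt hu_lim, hIic_mono.measure_iUnion]
  refine iSup_le fun n ↦ ?_
  calc ν (Iic (u n)) ≤ ν (Iio (u (n + 1))) :=
        measure_mono (Iic_subset_Iio.mpr (hu_mono n.lt_succ_self))
    _ ≤ c := h _ (hu_lt (n + 1))

lemma conv_apply_Iio [SFinite ν] : (ρ ∗ ν) (Iio a) = ∫⁻ t, ν (Iio (a - t)) ∂ρ := by
  rw [Measure.conv, Measure.map_apply measurable_add measurableSet_Iio,
    Measure.prod_apply (measurable_add measurableSet_Iio)]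
  simp only [preimage_preimage, preimage_const_add_Iio]

lemma conv_apply_Iio' [SFinite ρ] [SFinite ν] :
    (ρ ∗ ν) (Iio a) = ∫⁻ t, ρ (Iio (a - t)) ∂ν := by
  rw [Measure.conv_comm, conv_apply_Iio]

lemma ae_le_of_measure_Iio_eq_zero (h : ν (Iio m) = 0) : ∀ᵐ t ∂ν, m ≤ t := by
  simpa only [ae_iff, not_le] using! h

lemma AgreeBelow.conv_left [SFinite ν₀] [SFinite ν₁] (h : AgreeBelow b ν₀ ν₁)
    (hρ : ρ (Iio 0) = 0) : AgreeBelow b (ρ ∗ ν₀) (ρ ∗ ν₁) := by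
  intro a ha
  rw [conv_apply_Iio, conv_apply_Iio]
  refine lintegral_congr_ae ?_
  filter_upwards [ae_le_of_measure_Iio_eq_zero hρ] with t ht
  exact h _ (by linarith)

lemma conv_apply_Iio_le [SFinite ν] (hρ : ρ (Iio 0) = 0) (hν : ν (Iio m) = 0) :
    (ρ ∗ ν) (Iio a) ≤ ν (Iio a) * ρ (Iio (a - m)) := by
  rw [conv_apply_Iio, ← setLIntegral_const, ← lintegral_indicator measurableSet_Iio]
  refine lintegral_mono_ae ?_
  filter_upwards [ae_le_of_measure_Iio_eq_zero hρ] with t ht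
  by_cases htm : t < a - m
  · rw [indicator_of_mem (mem_Iio.mpr htm)]
    exact measure_mono (Iio_subset_Iio (by linarith))
  · rw [measure_mono_null (Iio_subset_Iio (by linarith)) hν]
    exact zero_le

lemma map_conv_map_apply_Iio {α β : Type*} [MeasurableSpace α] [MeasurableSpace β]
    {μ : Measure α} {η : Measure β} [SFinite μ] [SFinite η] {f : α → ℝ} {g : β → ℝ}
    (hf : Measurable f) (hg : Measurable g) :
    (μ.map f ∗ η.map g) (Iio a) = (μ.prod η) {p | f p.1 + g p.2 < a} := by
  rw [Measure.conv, Measure.map_prod_map _ _ hf hg,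
    Measure.map_map measurable_add (hf.prodMap hg),
    Measure.map_apply (measurable_add.comp (hf.prodMap hg)) measurableSet_Iio]
  rfl

end DistributionFunctions

section RepeatedIntegration

/-- Lebesgue measure on the positive half-line; convolving `ν` with it yields the measure with
density `s ↦ ν (Iio s)`, that is, integrates the distribution function. -/
noncomputable abbrev heaviside : Measure ℝ := volume.restrict (Ioi 0)

/-- The `n`-th convolution power of `heaviside`; convolution with it is `n`-fold repeated
integration. -/
noncomputable def heavisidePow : ℕ → Measure ℝ
  | 0 => Measure.dirac 0
  | n + 1 => heaviside ∗ heavisidePow n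

instance (n : ℕ) : SFinite (heavisidePow n) := by
  induction n with
  | zero => exact inferInstanceAs (SFinite (Measure.dirac 0))
  | succ n _ => exact inferInstanceAs (SFinite (heaviside ∗ heavisidePow n))

variable {ν ν₀ ν₁ : Measure ℝ} {a b : ℝ} {n : ℕ}

lemma heaviside_conv_apply_Iio [SFinite ν] :
    (heaviside ∗ ν) (Iio a) = ∫⁻ s in Iio a, ν (Iio s) := by
  have hpre : (fun t ↦ a - t) ⁻¹' Iio a = Ioi 0 := by ext; simp
  rw [conv_apply_Iio, heaviside, ← hpre]
  exact (Measure.measurePreserving_sub_left volume a).setLIntegral_comp_preimage measurableSet_Iio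
    (Monotone.measurable fun _ _ h ↦ measure_mono (Iio_subset_Iio h))

lemma heaviside_conv_Iio_eq_add [SFinite ν] (hab : a ≤ b) :
    (heaviside ∗ ν) (Iio b) = (heaviside ∗ ν) (Iio a) + ∫⁻ s in Ico a b, ν (Iio s) := by
  rw [heaviside_conv_apply_Iio, heaviside_conv_apply_Iio, ← Iio_union_Ico_eq_Iio hab,
    lintegral_union measurableSet_Ico
      ((Iio_disjoint_Ici le_rfl).mono_right Ico_subset_Ici_self)]

lemma mul_measure_Iio_le_setLIntegral_Ico :
    ENNReal.ofReal (b - a) * ν (Iio a) ≤ ∫⁻ s in Ico a b, ν (Iio s) := by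
  rw [mul_comm, ← Real.volume_Ico, ← setLIntegral_const]
  exact setLIntegral_mono' measurableSet_Ico fun s hs ↦ measure_mono (Iio_subset_Iio hs.1)

lemma setLIntegral_Ico_le_mul_measure_Iio :
    ∫⁻ s in Ico a b, ν (Iio s) ≤ ENNReal.ofReal (b - a) * ν (Iio b) := by
  rw [mul_comm, ← Real.volume_Ico, ← setLIntegral_const]
  exact setLIntegral_mono' measurableSet_Ico fun s hs ↦ measure_mono (Iio_subset_Iio hs.2.le)

lemma measure_Iio_ne_top_of_heaviside_conv [SFinite ν]
    (hfin : ∀ a < b, (heaviside ∗ ν) (Iio a) ≠ ∞) : ∀ a < b, ν (Iio a) ≠ ∞ := by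
  intro a ha htop
  obtain ⟨c, hac, hcb⟩ := exists_between ha
  apply hfin c hcb
  rw [heaviside_conv_Iio_eq_add hac.le, ENNReal.add_eq_top, ← top_le_iff (a := lintegral _ _)]
  right
  calc ∞ = ENNReal.ofReal (c - a) * ν (Iio a) := by
        rw [htop, ENNReal.mul_top (ENNReal.ofReal_pos.mpr (sub_pos.mpr hac)).ne']
    _ ≤ _ := mul_measure_Iio_le_setLIntegral_Ico

lemma AgreeBelow.le_of_heaviside_conv [SFinite ν₀] [SFinite ν₁]
    (hfin : ∀ a < b, (heaviside ∗ ν₀) (Iio a) ≠ ∞)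
    (h : AgreeBelow b (heaviside ∗ ν₀) (heaviside ∗ ν₁)) (ha : a < b) :
    ν₀ (Iio a) ≤ ν₁ (Iio a) := by
  refine measure_Iio_le_of_forall_lt fun s hs ↦ ?_
  have hIco : ∫⁻ t in Ico s a, ν₀ (Iio t) = ∫⁻ t in Ico s a, ν₁ (Iio t) := by
    have hadd := h a ha
    rw [heaviside_conv_Iio_eq_add hs.le, heaviside_conv_Iio_eq_add hs.le,
      ← h s (hs.trans ha)] at hadd
    exact (ENNReal.add_right_inj (hfin s (hs.trans ha))).mp hadd
  refine (ENNReal.mul_le_mul_iff_right (ENNReal.ofReal_pos.mpr (sub_pos.mpr hs)).ne'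
    ENNReal.ofReal_ne_top).mp ?_
  calc ENNReal.ofReal (a - s) * ν₀ (Iio s)
      ≤ ∫⁻ t in Ico s a, ν₀ (Iio t) := mul_measure_Iio_le_setLIntegral_Ico
    _ = ∫⁻ t in Ico s a, ν₁ (Iio t) := hIco
    _ ≤ ENNReal.ofReal (a - s) * ν₁ (Iio a) := setLIntegral_Ico_le_mul_measure_Iio

lemma AgreeBelow.of_heaviside_conv [SFinite ν₀] [SFinite ν₁]
    (hfin : ∀ a < b, (heaviside ∗ ν₀) (Iio a) ≠ ∞)
    (h : AgreeBelow b (heaviside ∗ ν₀) (heaviside ∗ ν₁)) : AgreeBelow b ν₀ ν₁ := by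
  intro a ha
  exact (h.le_of_heaviside_conv hfin ha).antisymm
    (AgreeBelow.le_of_heaviside_conv (fun a ha ↦ h a ha ▸ hfin a ha)
      (fun a ha ↦ (h a ha).symm) ha)

lemma AgreeBelow.of_heavisidePow_conv [SFinite ν₀] [SFinite ν₁]
    (hfin : ∀ a < b, (heavisidePow n ∗ ν₀) (Iio a) ≠ ∞)
    (h : AgreeBelow b (heavisidePow n ∗ ν₀) (heavisidePow n ∗ ν₁)) : AgreeBelow b ν₀ ν₁ := by
  induction n with
  | zero => simpa only [heavisidePow, Measure.dirac_zero_conv] using h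
  | succ n ih =>
    simp only [heavisidePow, Measure.conv_assoc] at hfin h
    exact ih (measure_Iio_ne_top_of_heaviside_conv hfin) (h.of_heaviside_conv hfin)

lemma heavisidePow_apply_Iio_of_nonpos (ha : a ≤ 0) : heavisidePow n (Iio a) = 0 := by
  induction n generalizing a with
  | zero => simp [heavisidePow, ha]
  | succ n ih =>
    rw [heavisidePow, heaviside_conv_apply_Iio]
    exact setLIntegral_eq_zero measurableSet_Iio fun s hs ↦ ih (hs.le.trans ha)

lemma heavisidePow_apply_Iio (ha : 0 < a) :
    heavisidePow n (Iio a) = ENNReal.ofReal (a ^ n / n.factorial) := by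
  induction n generalizing a with
  | zero => simp [heavisidePow, ha]
  | succ n ih =>
    have hint : ∫ s in (0)..a, s ^ n / n.factorial = a ^ (n + 1) / (n + 1).factorial := by
      rw [intervalIntegral.integral_div, integral_pow, Nat.factorial_succ]
      push_cast
      field_simp
      simp
    rw [heavisidePow, heaviside_conv_Iio_eq_add ha.le, ← heavisidePow,
      heavisidePow_apply_Iio_of_nonpos le_rfl, zero_add, ← hint,
      intervalIntegral.integral_of_le ha.le, integral_Ioc_eq_integral_Ioo,
      ofReal_integral_eq_lintegral_ofReal]
    · rw [setLIntegral_congr Ioo_ae_eq_Ico.symm]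
      exact setLIntegral_congr_fun measurableSet_Ioo fun s hs ↦ ih hs.1
    · exact (Continuous.integrableOn_Icc (by fun_prop)).mono_set Ioo_subset_Icc_self
    · filter_upwards [ae_restrict_mem measurableSet_Ioo] with s hs
      have := hs.1
      positivity

lemma heavisidePow_apply_Iio_ne_top : heavisidePow n (Iio a) ≠ ∞ := by
  rcases le_or_gt a 0 with ha | ha
  · simp only [heavisidePow_apply_Iio_of_nonpos ha, ne_eq, ENNReal.zero_ne_top, not_false_eq_true]
  · simp only [heavisidePow_apply_Iio ha, ne_eq, ENNReal.ofReal_ne_top, not_false_eq_true]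

end RepeatedIntegration

section KineticEnergy

variable {V : Type*} [NormedAddCommGroup V]

/-- The distribution on `ℝ` of the kinetic energy `‖v‖² / 2` of a velocity `v`. Convolving it with
the distribution of a potential gives that of the total energy. -/
noncomputable def kineticDistribution [MeasurableSpace V] (η : Measure V) : Measure ℝ :=
  η.map fun v ↦ ‖v‖ ^ 2 / 2

/-- The pairs of velocities of total kinetic energy less than `a`, whose measure is the distribution
function of the self-convolution of `kineticDistribution`. -/
def kineticBall (V : Type*) [NormedAddCommGroup V] (a : ℝ) : Set (V × V) :=
  {p | ‖p.1‖ ^ 2 / 2 + ‖p.2‖ ^ 2 / 2 < a}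

lemma isOpen_kineticBall (a : ℝ) : IsOpen (kineticBall V a) :=
  isOpen_lt (by fun_prop) continuous_const

lemma kineticBall_eq_empty {a : ℝ} (ha : a ≤ 0) : kineticBall V a = ∅ :=
  eq_empty_of_forall_notMem fun _ hp ↦ (hp.trans_le ha).not_ge (by positivity)

lemma isBounded_kineticBall (a : ℝ) : Bornology.IsBounded (kineticBall V a) := by
  refine isBounded_iff_forall_norm_le.mpr ⟨√(2 * a), fun p (hp : _ < a) ↦ ?_⟩
  refine norm_prod_le_iff.mpr ⟨?_, ?_⟩ <;>
    exact Real.le_sqrt_of_sq_le (by nlinarith [sq_nonneg ‖p.1‖, sq_nonneg ‖p.2‖])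

lemma kineticBall_eq_smul [NormedSpace ℝ V] {a : ℝ} (ha : 0 < a) :
    kineticBall V a = √a • kineticBall V 1 := by
  ext p
  rw [mem_smul_set_iff_inv_smul_mem₀ (Real.sqrt_pos.mpr ha).ne']
  simp only [kineticBall, mem_ofPred_eq, Prod.smul_fst, Prod.smul_snd, norm_smul, mul_pow,
    norm_inv, Real.norm_eq_abs, inv_pow, sq_abs, Real.sq_sqrt ha.le]
  rw [mul_div_assoc, mul_div_assoc, ← mul_add, inv_mul_lt_iff₀ ha, mul_one]

variable [MeasurableSpace V] (η : Measure V)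

instance [SFinite η] : SFinite (kineticDistribution η) :=
  inferInstanceAs (SFinite (η.map _))

lemma kineticDistribution_Iio_zero [OpensMeasurableSpace V] :
    kineticDistribution η (Iio 0) = 0 := by
  rw [kineticDistribution, Measure.map_apply (by fun_prop) measurableSet_Iio]
  convert measure_empty (μ := η)
  ext v
  simpa using by positivity

lemma kineticDistribution_conv_map_apply_Iio [OpensMeasurableSpace V] [SFinite η]
    {X : Type*} [MeasurableSpace X] {μ : Measure X} [SFinite μ] {ψ : X → ℝ}
    (hψ : Measurable ψ) {a : ℝ} :
    (kineticDistribution η ∗ μ.map ψ) (Iio a) =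
      (μ.prod η) {p | ‖p.2‖ ^ 2 / 2 + ψ p.1 < a} := by
  rw [Measure.conv_comm, kineticDistribution, map_conv_map_apply_Iio hψ (by fun_prop)]
  simp only [add_comm]

variable [NormedSpace ℝ V] [FiniteDimensional ℝ V] [BorelSpace V] [η.IsAddHaarMeasure]

lemma measure_kineticBall {a : ℝ} (ha : 0 < a) :
    (η.prod η) (kineticBall V a) =
      ENNReal.ofReal (a ^ Module.finrank ℝ V) * (η.prod η) (kineticBall V 1) := by
  have := Measure.prod.instIsAddHaarMeasure η η
  rw [kineticBall_eq_smul ha, Measure.addHaar_smul, Module.finrank_prod, ← two_mul, pow_mul,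
    Real.sq_sqrt ha.le, abs_of_pos (by positivity)]

/-- Doubling the velocity replaces the power `a ^ (dim V / 2)` to which the volume of a velocity
ball is proportional by the integer power `a ^ dim V`. -/
lemma exists_kineticDistribution_conv_self_eq :
    ∃ C : ℝ≥0∞, C ≠ 0 ∧ C ≠ ∞ ∧ ∀ a, (kineticDistribution η ∗ kineticDistribution η) (Iio a) =
      C * heavisidePow (Module.finrank ℝ V) (Iio a) := by
  set d := Module.finrank ℝ V
  have hpos : (η.prod η) (kineticBall V 1) ≠ 0 :=
    ((isOpen_kineticBall 1).measure_pos _ ⟨0, by simp [kineticBall]⟩).ne'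
  have hfin : (η.prod η) (kineticBall V 1) ≠ ∞ :=
    (isBounded_kineticBall 1).measure_lt_top.ne
  refine ⟨d.factorial * (η.prod η) (kineticBall V 1),
    mul_ne_zero (by exact_mod_cast d.factorial_ne_zero) hpos,
    ENNReal.mul_ne_top (ENNReal.natCast_ne_top _) hfin, fun a ↦ ?_⟩
  have hconv : (kineticDistribution η ∗ kineticDistribution η) (Iio a) =
      (η.prod η) (kineticBall V a) := map_conv_map_apply_Iio (by fun_prop) (by fun_prop)
  rw [hconv]
  rcases le_or_gt a 0 with ha | ha
  · rw [kineticBall_eq_empty ha, heavisidePow_apply_Iio_of_nonpos ha, measure_empty, mul_zero]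
  · rw [measure_kineticBall η ha, heavisidePow_apply_Iio ha, mul_right_comm,
      ← ENNReal.ofReal_natCast, ← ENNReal.ofReal_mul (by positivity),
      mul_div_cancel₀ _ (by positivity)]

lemma AgreeBelow.of_kineticDistribution_conv {ν₀ ν₁ : Measure ℝ} [SFinite ν₀] [SFinite ν₁]
    {b m : ℝ} (hfin : ∀ a < b, ν₀ (Iio a) ≠ ∞) (hm : ν₀ (Iio m) = 0)
    (h : AgreeBelow b (kineticDistribution η ∗ ν₀) (kineticDistribution η ∗ ν₁)) :
    AgreeBelow b ν₀ ν₁ := by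
  obtain ⟨C, hC_ne_zero, hC_ne_top, hC⟩ := exists_kineticDistribution_conv_self_eq η
  have hpow (ν : Measure ℝ) [SFinite ν] (a : ℝ) :
      (kineticDistribution η ∗ kineticDistribution η ∗ ν) (Iio a) =
        C * (heavisidePow (Module.finrank ℝ V) ∗ ν) (Iio a) := by
    rw [← Measure.conv_assoc, conv_apply_Iio', conv_apply_Iio',
      ← lintegral_const_mul' _ _ hC_ne_top]
    exact lintegral_congr fun t ↦ hC (a - t)
  refine .of_heavisidePow_conv (n := Module.finrank ℝ V) (fun a ha ↦ ?_) fun a ha ↦ ?_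
  · exact ne_top_of_le_ne_top (ENNReal.mul_ne_top (hfin a ha) heavisidePow_apply_Iio_ne_top)
      (conv_apply_Iio_le (heavisidePow_apply_Iio_of_nonpos le_rfl) hm)
  · have hdouble := h.conv_left (kineticDistribution_Iio_zero η) a ha
    rwa [hpow, hpow, ENNReal.mul_right_inj hC_ne_zero hC_ne_top] at hdouble

end KineticEnergy

section Potential

lemma measure_lt_measure_of_isClosed_of_isOpen {X : Type*} [TopologicalSpace X]
    [PreconnectedSpace X] [MeasurableSpace X] [OpensMeasurableSpace X] {μ : Measure X}
    [μ.IsOpenPosMeasure] {K U : Set X} (hK : IsClosed K) (hK_nonempty : K.Nonempty)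
    (hK_fin : μ K ≠ ∞) (hU : IsOpen U) (hU_ne : U ≠ univ) (hKU : K ⊆ U) : μ K < μ U := by
  refine (measure_mono hKU).lt_of_ne fun hμ ↦ hU_ne ?_
  have hnull : μ (U \ K) = 0 := by
    rw [measure_sdiff hKU hK.measurableSet.nullMeasurableSet hK_fin, hμ, tsub_self]
  have hUK : U ⊆ K := sdiff_eq_empty.mp (((hU.sdiff hK).measure_eq_zero_iff μ).mp hnull)
  have hclopen : IsClopen U := ⟨hUK.antisymm hKU ▸ hK, hU⟩
  exact hclopen.eq_univ (hK_nonempty.mono hKU)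

variable {X : Type*} [NormedAddCommGroup X] [NormedSpace ℝ X] [Nontrivial X] [ProperSpace X]
  [MeasurableSpace X] [OpensMeasurableSpace X] {μ : Measure X} [IsFiniteMeasureOnCompacts μ]
  [μ.IsOpenPosMeasure] {ψ₀ ψ₁ : X → ℝ} {b : ℝ}

/-- If `ψ₀ x < a < ψ₁ x`, then `{ψ₁ < a} ⊆ closedBall 0 ‖x‖ ⊆ {ψ₀ < a}`, and the second inclusion
is strict in measure, its right-hand side being open. -/
lemma potential_le_of_agreeBelow (hψ₀ : UpperSemicontinuous ψ₀) (hψ₁ : Measurable ψ₁)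
    (hmono₀ : ∀ x y, ‖x‖ ≤ ‖y‖ → ψ₀ x ≤ ψ₀ y) (hmono₁ : ∀ x y, ‖x‖ ≤ ‖y‖ → ψ₁ x ≤ ψ₁ y)
    (hbdd : Bornology.IsBounded {x | ψ₀ x < b})
    (h : AgreeBelow b (μ.map ψ₀) (μ.map ψ₁)) {x : X} (hx : ψ₀ x < b) : ψ₁ x ≤ ψ₀ x := by
  by_contra! hlt
  obtain ⟨a, hxa, ha⟩ := exists_between (lt_min hlt hx)
  obtain ⟨ha_le, ha_lt⟩ := lt_min_iff.mp ha
  have hne : ψ₀ ⁻¹' Iio a ≠ univ := fun huniv ↦ NormedSpace.unbounded_univ ℝ X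
    (huniv ▸ hbdd.subset fun y (hy : ψ₀ y < a) ↦ hy.trans ha_lt)
  have hsub₁ : ψ₁ ⁻¹' Iio a ⊆ Metric.closedBall 0 ‖x‖ := fun y (hy : ψ₁ y < a) ↦ by
    rw [mem_closedBall_zero_iff]
    by_contra! hxy
    exact (hy.trans ha_le).not_ge (hmono₁ x y hxy.le)
  have hsub₀ : Metric.closedBall 0 ‖x‖ ⊆ ψ₀ ⁻¹' Iio a := fun y hy ↦
    (hmono₀ y x (mem_closedBall_zero_iff.mp hy)).trans_lt hxa
  have hagree := h a ha_lt
  rw [Measure.map_apply hψ₀.measurable measurableSet_Iio,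
    Measure.map_apply hψ₁ measurableSet_Iio] at hagree
  refine hagree.not_gt ?_
  calc μ (ψ₁ ⁻¹' Iio a) ≤ μ (Metric.closedBall 0 ‖x‖) := measure_mono hsub₁
    _ < μ (ψ₀ ⁻¹' Iio a) := measure_lt_measure_of_isClosed_of_isOpen Metric.isClosed_closedBall
        (Metric.nonempty_closedBall.mpr (norm_nonneg x)) measure_closedBall_lt_top.ne
        (hψ₀.isOpen_preimage a) hne hsub₀

lemma min_eq_min_of_agreeBelow (hψ₀ : UpperSemicontinuous ψ₀) (hψ₁ : UpperSemicontinuous ψ₁)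
    (hmono₀ : ∀ x y, ‖x‖ ≤ ‖y‖ → ψ₀ x ≤ ψ₀ y) (hmono₁ : ∀ x y, ‖x‖ ≤ ‖y‖ → ψ₁ x ≤ ψ₁ y)
    (hbdd₀ : Bornology.IsBounded {x | ψ₀ x < b}) (hbdd₁ : Bornology.IsBounded {x | ψ₁ x < b})
    (h : AgreeBelow b (μ.map ψ₀) (μ.map ψ₁)) (x : X) : min (ψ₀ x) b = min (ψ₁ x) b := by
  have hle₁ : ψ₀ x < b → ψ₁ x ≤ ψ₀ x :=
    potential_le_of_agreeBelow hψ₀ hψ₁.measurable hmono₀ hmono₁ hbdd₀ h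
  have hle₀ : ψ₁ x < b → ψ₀ x ≤ ψ₁ x :=
    potential_le_of_agreeBelow hψ₁ hψ₀.measurable hmono₁ hmono₀ hbdd₁ fun a ha ↦ (h a ha).symm
  grind

end Potential

section Profile

variable {F : ℝ → ℝ}

lemma profile_pos (hFanti : StrictAntiOn F (Iic 0)) (hFzero : ∀ s, 0 ≤ s → F s = 0) {e : ℝ}
    (he : e < 0) : 0 < F e :=
  hFzero 0 le_rfl ▸ hFanti he.le self_mem_Iic he

lemma profile_lt_profile_iff (hFanti : StrictAntiOn F (Iic 0)) (hFzero : ∀ s, 0 ≤ s → F s = 0)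
    {e s : ℝ} (he : e < 0) : F e < F s ↔ s < e := by
  rcases le_total s 0 with hs | hs
  · exact hFanti.lt_iff_gt he.le hs
  · rw [hFzero s hs]
    exact iff_of_false (profile_pos hFanti hFzero he).not_gt (he.trans_le hs).not_gt

lemma profile_add_eq_of_min_eq (hFzero : ∀ s, 0 ≤ s → F s = 0) {k e₀ e₁ : ℝ} (hk : 0 ≤ k)
    (h : min e₀ 0 = min e₁ 0) : F (k + e₀) = F (k + e₁) := by
  grind

end Profile

theorem uniqueness_under_equimeasurability_general
    {X V : Type*} [NormedAddCommGroup X] [NormedSpace ℝ X] [Nontrivial X] [ProperSpace X]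
    [MeasurableSpace X] [OpensMeasurableSpace X] {μ : Measure X} [IsFiniteMeasureOnCompacts μ]
    [μ.IsOpenPosMeasure] [NormedAddCommGroup V] [NormedSpace ℝ V] [FiniteDimensional ℝ V]
    [MeasurableSpace V] [BorelSpace V] {η : Measure V} [η.IsAddHaarMeasure]
    {ψ₀ ψ₁ : X → ℝ} {F : ℝ → ℝ}
    (hψ₀ : UpperSemicontinuous ψ₀) (hψ₁ : UpperSemicontinuous ψ₁)
    (hmono₀ : ∀ x y, ‖x‖ ≤ ‖y‖ → ψ₀ x ≤ ψ₀ y) (hmono₁ : ∀ x y, ‖x‖ ≤ ‖y‖ → ψ₁ x ≤ ψ₁ y)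
    (hbdd₀ : Bornology.IsBounded {x | ψ₀ x < 0}) (hbdd₁ : Bornology.IsBounded {x | ψ₁ x < 0})
    (hFanti : StrictAntiOn F (Iic 0)) (hFzero : ∀ s, 0 ≤ s → F s = 0)
    (hequi : ∀ t, 0 < t → (μ.prod η) {p | t < F (‖p.2‖ ^ 2 / 2 + ψ₀ p.1)} =
      (μ.prod η) {p | t < F (‖p.2‖ ^ 2 / 2 + ψ₁ p.1)}) (x : X) (v : V) :
    F (‖v‖ ^ 2 / 2 + ψ₀ x) = F (‖v‖ ^ 2 / 2 + ψ₁ x) := by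
  have henergy : AgreeBelow 0 (kineticDistribution η ∗ μ.map ψ₀)
      (kineticDistribution η ∗ μ.map ψ₁) := fun a ha ↦ by
    have hlevel := hequi (F a) (profile_pos hFanti hFzero ha)
    simp only [profile_lt_profile_iff hFanti hFzero ha] at hlevel
    rwa [kineticDistribution_conv_map_apply_Iio η hψ₀.measurable,
      kineticDistribution_conv_map_apply_Iio η hψ₁.measurable]
  have hfin : ∀ a < 0, μ.map ψ₀ (Iio a) ≠ ∞ := fun a ha ↦ by
    rw [Measure.map_apply hψ₀.measurable measurableSet_Iio]
    exact (hbdd₀.subset fun y (hy : ψ₀ y < a) ↦ hy.trans ha).measure_lt_top.ne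
  have hmin : μ.map ψ₀ (Iio (ψ₀ 0)) = 0 := by
    rw [Measure.map_apply hψ₀.measurable measurableSet_Iio]
    exact measure_mono_null
      (fun y (hy : ψ₀ y < ψ₀ 0) ↦ hy.not_ge (hmono₀ 0 y (by simp))) measure_empty
  have hpotential : AgreeBelow 0 (μ.map ψ₀) (μ.map ψ₁) :=
    henergy.of_kineticDistribution_conv η hfin hmin
  exact profile_add_eq_of_min_eq hFzero (by positivity)
    (min_eq_min_of_agreeBelow hψ₀ hψ₁ hmono₀ hmono₁ hbdd₀ hbdd₁ hpotential x)

/-- Uniqueness under equimeasurability: if `Q_i(x,v) = F(|v|²/2 + ψ_i(x))` with a common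
strictly decreasing profile `F` and continuous radially symmetric nondecreasing potentials
`ψ_i` with bounded negativity sets, then equimeasurability of `Q₀` and `Q₁` implies `Q₀ = Q₁`. -/
theorem uniqueness_under_equimeasurability
    (ψ₀ ψ₁ : EuclideanSpace ℝ (Fin 3) → ℝ) (F : ℝ → ℝ)
    (hc0 : Continuous ψ₀) (hc1 : Continuous ψ₁)
    (hmono0 : ∀ x y, ‖x‖ ≤ ‖y‖ → ψ₀ x ≤ ψ₀ y)
    (hmono1 : ∀ x y, ‖x‖ ≤ ‖y‖ → ψ₁ x ≤ ψ₁ y)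
    (hrad0 : ∀ x y, ‖x‖ = ‖y‖ → ψ₀ x = ψ₀ y)
    (hrad1 : ∀ x y, ‖x‖ = ‖y‖ → ψ₁ x = ψ₁ y)
    (hbdd0 : Bornology.IsBounded {x | ψ₀ x < 0})
    (hbdd1 : Bornology.IsBounded {x | ψ₁ x < 0})
    (hFc : Continuous F) (hFnn : ∀ s, 0 ≤ F s)
    (hFanti : StrictAntiOn F (Set.Iic 0))
    (hFsurj : F '' Set.Iic 0 = Set.Ici 0)
    (hFzero : ∀ s, 0 ≤ s → F s = 0)
    (hequi : ∀ t, 0 < t →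
      volume {p : EuclideanSpace ℝ (Fin 3) × EuclideanSpace ℝ (Fin 3) |
          t < F (‖p.2‖ ^ 2 / 2 + ψ₀ p.1)}
        = volume {p : EuclideanSpace ℝ (Fin 3) × EuclideanSpace ℝ (Fin 3) |
          t < F (‖p.2‖ ^ 2 / 2 + ψ₁ p.1)}) :
    ∀ x v : EuclideanSpace ℝ (Fin 3),
      F (‖v‖ ^ 2 / 2 + ψ₀ x) = F (‖v‖ ^ 2 / 2 + ψ₁ x) :=
  uniqueness_under_equimeasurability_general hc0.upperSemicontinuous hc1.upperSemicontinuous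
    hmono0 hmono1 hbdd0 hbdd1 hFanti hFzero hequi
end
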